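/- Representation Formula: let U ⊆ ℍ be an axially symmetric slice domain and let f : U → ℍ be left slice regular on U. Then for every J ∈ 𝕊 and every q = x + Iy ∈ U (with I ∈ 𝕊, x, y ∈ ℝ), the equality f(x+Iy) = (1/2)[ f(x+Jy) + f(x−Jy) ] + I·(1/2)[ J ( f(x−Jy) − f(x+Jy) ) ] holds. -/

import Mathlib

open MeasureTheory Real Nat

noncomputable section

local notation "ℍ" => Quaternion ℝ

/-- The sphere of quaternionic imaginary units. -/
def quatSphere : Set ℍ := {q | q.re = 0 ∧ ‖q‖ = 1}

/-- The point `x + y I` of the slice `ℂ_I`. -/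
def sliceVal (I : ℍ) (z : ℝ × ℝ) : ℍ := ((z.1 : ℍ)) + ((z.2 : ℍ)) * I

/-- `U` is axially symmetric: it contains the whole sphere `[x + Iy]` of each of its points. -/
def AxiallySymmetric (U : Set ℍ) : Prop :=
  ∀ (x y : ℝ), ∀ I ∈ quatSphere, sliceVal I (x, y) ∈ U → ∀ J ∈ quatSphere, sliceVal J (x, y) ∈ U

/-- `U` is a slice domain: a domain intersecting the real axis, whose slices are domains. -/
def SliceDomain (U : Set ℍ) : Prop :=
  IsOpen U ∧ IsConnected U ∧ (∃ r : ℝ, (r : ℍ) ∈ U) ∧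
    ∀ I ∈ quatSphere, IsConnected {z : ℝ × ℝ | sliceVal I z ∈ U}

/-- `f` is left slice regular on `U`: on each slice it is real differentiable and satisfies the
Cauchy–Riemann equation `(∂/∂x + I ∂/∂y) f_I = 0`. -/
def SliceRegularOn (f : ℍ → ℍ) (U : Set ℍ) : Prop :=
  ∀ I ∈ quatSphere, ∀ z : ℝ × ℝ, sliceVal I z ∈ U →
    DifferentiableAt ℝ (fun w : ℝ × ℝ => f (sliceVal I w)) z ∧
      fderiv ℝ (fun w : ℝ × ℝ => f (sliceVal I w)) z (1, 0) +
        I * fderiv ℝ (fun w : ℝ × ℝ => f (sliceVal I w)) z (0, 1) = 0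

/-!
Fix the imaginary unit `I`. The restriction of `f` to `ℂ_I` and its combination of the restrictions
to `ℂ_J` and `ℂ_{-J}` prescribed by the formula are maps of `(x, y)` solving the same
Cauchy–Riemann equation `(∂/∂x + I ∂/∂y) g = 0`: the coefficients `a = (1 - I J) / 2` and
`b = (1 + I J) / 2` satisfy `a J = I a` and `b (-J) = I b`, so left multiplication by them carries
the equations for `J` and `-J` to the one for `I`. As `a + b = 1`, the two maps agree on the real
axis, hence everywhere by the identity principle. The latter reduces to holomorphic functions by
complexifying the real functionals on `ℍ` with respect to left multiplication by `I`.
-/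

open Filter Set Topology

section CauchyRiemann

variable {E F : Type*} [NormedAddCommGroup E] [NormedSpace ℝ E] [NormedAddCommGroup F]
  [NormedSpace ℝ F] {T : E →L[ℝ] E} {S : F →L[ℝ] F} {g h : ℝ × ℝ → E} {z : ℝ × ℝ}

/-- The Cauchy–Riemann equation `(∂/∂x + T ∂/∂y) g = 0` at `z`, for a real differentiable map into a
real normed space on which the operator `T` plays the role of the imaginary unit. -/
def CauchyRiemannAt (T : E →L[ℝ] E) (g : ℝ × ℝ → E) (z : ℝ × ℝ) : Prop :=
  DifferentiableAt ℝ g z ∧ fderiv ℝ g z (1, 0) + T (fderiv ℝ g z (0, 1)) = 0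

namespace CauchyRiemannAt

theorem add (hg : CauchyRiemannAt T g z) (hh : CauchyRiemannAt T h z) :
    CauchyRiemannAt T (g + h) z := by
  refine ⟨hg.1.add hh.1, ?_⟩
  rw [fderiv_add hg.1 hh.1, add_apply, add_apply, map_add, add_add_add_comm, hg.2, hh.2, add_zero]

theorem neg (hg : CauchyRiemannAt T g z) : CauchyRiemannAt T (-g) z := by
  refine ⟨hg.1.neg, ?_⟩
  rw [fderiv_neg, neg_apply, neg_apply, map_neg, ← neg_add, hg.2, neg_zero]

theorem sub (hg : CauchyRiemannAt T g z) (hh : CauchyRiemannAt T h z) :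
    CauchyRiemannAt T (g - h) z :=
  sub_eq_add_neg g h ▸ hg.add hh.neg

theorem clm_comp (hg : CauchyRiemannAt T g z) {L : E →L[ℝ] F} (hL : ∀ v, L (T v) = S (L v)) :
    CauchyRiemannAt S (L ∘ g) z := by
  have hd : HasFDerivAt (L ∘ g) (L.comp (fderiv ℝ g z)) z :=
    L.hasFDerivAt.comp z hg.1.hasFDerivAt
  refine ⟨hd.differentiableAt, ?_⟩
  rw [hd.fderiv, ContinuousLinearMap.comp_apply, ContinuousLinearMap.comp_apply, ← hL, ← map_add,
    hg.2, map_zero]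

end CauchyRiemannAt

section ComplexTarget

variable {G : Type*} [NormedAddCommGroup G] [NormedSpace ℂ G] {p : ℝ × ℝ → G}

theorem CauchyRiemannAt.differentiableAt_complex {w : ℂ}
    (hp : CauchyRiemannAt (Complex.I • ContinuousLinearMap.id ℝ G) p
      (Complex.equivRealProdCLM w)) :
    DifferentiableAt ℂ (p ∘ Complex.equivRealProdCLM) w := by
  have hd : HasFDerivAt (p ∘ Complex.equivRealProdCLM)
      ((fderiv ℝ p (Complex.equivRealProdCLM w)).comp
        (Complex.equivRealProdCLM : ℂ →L[ℝ] ℝ × ℝ)) w :=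
    hp.1.hasFDerivAt.comp w Complex.equivRealProdCLM.hasFDerivAt
  refine differentiableAt_complex_iff_differentiableAt_real.2 ⟨hd.differentiableAt, ?_⟩
  have h1 : Complex.equivRealProdCLM 1 = (1, 0) := rfl
  have hI : Complex.equivRealProdCLM Complex.I = (0, 1) := rfl
  have hCR := eq_neg_of_add_eq_zero_left hp.2
  rw [smul_apply, ContinuousLinearMap.id_apply] at hCR
  rw [hd.fderiv, ContinuousLinearMap.comp_apply, ContinuousLinearMap.comp_apply,
    ContinuousLinearEquiv.coe_coe, h1, hI, hCR, smul_neg, smul_smul, Complex.I_mul_I, neg_one_smul,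
    neg_neg]

theorem eqOn_zero_of_cauchyRiemannAt_I_smul [CompleteSpace G] {V : Set (ℝ × ℝ)} (hVo : IsOpen V)
    (hVc : IsPreconnected V)
    (hp : ∀ w ∈ V, CauchyRiemannAt (Complex.I • ContinuousLinearMap.id ℝ G) p w)
    (hz : z ∈ V) (h0 : ∃ᶠ w in 𝓝[≠] z, p w = 0) : EqOn p 0 V := by
  let e := Complex.equivRealProdCLM
  have hanalytic : AnalyticOnNhd ℂ (p ∘ e) (e ⁻¹' V) :=
    DifferentiableOn.analyticOnNhd
      (fun w hw ↦ (hp (e w) hw).differentiableAt_complex.differentiableWithinAt)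
      (hVo.preimage e.continuous)
  have hpreconnected : IsPreconnected (e ⁻¹' V) := e.toHomeomorph.isPreconnected_preimage.2 hVc
  have htendsto : Tendsto e.symm (𝓝[≠] z) (𝓝[≠] (e.symm z)) :=
    e.symm.continuous.continuousWithinAt.tendsto_nhdsWithin fun _ hw ↦ e.symm.injective.ne hw
  have hfreq : ∃ᶠ w in 𝓝[≠] (e.symm z), (p ∘ e) w = 0 :=
    htendsto.frequently (h0.mono fun w hw ↦ by simpa using hw)
  have hzero := hanalytic.eqOn_zero_of_preconnected_of_frequently_eq_zero hpreconnected
    (by simpa using hz) hfreq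
  intro w hw
  simpa using hzero (show e.symm w ∈ e ⁻¹' V by simpa using hw)

end ComplexTarget

/-- The complexification `v ↦ l v - i l (T v)` of a real functional `l`. When `T² = -1` it is
complex linear for the complex structure `T`, and its real part is `l`. -/
def complexifyFunctional (T : E →L[ℝ] E) (l : E →L[ℝ] ℝ) : E →L[ℝ] ℂ :=
  Complex.ofRealCLM.comp l - Complex.I • Complex.ofRealCLM.comp (l.comp T)

theorem complexifyFunctional_apply (l : E →L[ℝ] ℝ) (v : E) :
    complexifyFunctional T l v = l v - Complex.I * l (T v) := rfl

theorem re_complexifyFunctional (l : E →L[ℝ] ℝ) (v : E) :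
    (complexifyFunctional T l v).re = l v := by
  simp [complexifyFunctional_apply]

theorem complexifyFunctional_map (hT : ∀ v, T (T v) = -v) (l : E →L[ℝ] ℝ) (v : E) :
    complexifyFunctional T l (T v) = Complex.I * complexifyFunctional T l v := by
  rw [complexifyFunctional_apply, complexifyFunctional_apply, hT, map_neg, mul_sub, ← mul_assoc,
    Complex.I_mul_I]
  push_cast
  ring

theorem eqOn_zero_of_cauchyRiemannAt (hT : ∀ v, T (T v) = -v) {V : Set (ℝ × ℝ)} (hVo : IsOpen V)
    (hVc : IsPreconnected V) (hg : ∀ w ∈ V, CauchyRiemannAt T g w) (hz : z ∈ V)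
    (h0 : ∃ᶠ w in 𝓝[≠] z, g w = 0) : EqOn g 0 V := by
  intro w hw
  refine SeparatingDual.eq_zero_of_forall_dual_eq_zero (R := ℝ) fun l ↦ ?_
  let L := complexifyFunctional T l
  have hzero : EqOn (L ∘ g) 0 V :=
    eqOn_zero_of_cauchyRiemannAt_I_smul hVo hVc
      (fun u hu ↦ (hg u hu).clm_comp (complexifyFunctional_map hT l)) hz
      (h0.mono fun u hu ↦ by rw [Function.comp_apply, hu, map_zero])
  calc
    l (g w) = (L (g w)).re := (re_complexifyFunctional l (g w)).symm
    _ = 0 := congrArg Complex.re (hzero hw)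

theorem eqOn_of_cauchyRiemannAt (hT : ∀ v, T (T v) = -v) {V : Set (ℝ × ℝ)} (hVo : IsOpen V)
    (hVc : IsPreconnected V) (hg : ∀ w ∈ V, CauchyRiemannAt T g w)
    (hh : ∀ w ∈ V, CauchyRiemannAt T h w) (hz : z ∈ V) (hgh : ∃ᶠ w in 𝓝[≠] z, g w = h w) :
    EqOn g h V := fun _ hw ↦
  sub_eq_zero.1 <| eqOn_zero_of_cauchyRiemannAt hT hVo hVc (fun w hw ↦ (hg w hw).sub (hh w hw)) hz
    (hgh.mono fun _ ↦ sub_eq_zero.2) hw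

end CauchyRiemann

theorem frequently_nhdsNE_of_forall_real_axis {p : ℝ × ℝ → Prop} (hp : ∀ t : ℝ, p (t, 0)) (r : ℝ) :
    ∃ᶠ w in 𝓝[≠] (r, 0), p w := by
  have htendsto : Tendsto (fun t : ℝ ↦ (t, (0 : ℝ))) (𝓝[≠] r) (𝓝[≠] (r, 0)) :=
    ContinuousWithinAt.tendsto_nhdsWithin (by fun_prop) fun _ ht ↦ (Prod.mk_left_injective 0).ne ht
  exact htendsto.frequently (Frequently.of_forall hp)

theorem mul_self_of_mem_quatSphere {I : ℍ} (hI : I ∈ quatSphere) : I * I = -1 := by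
  rw [← sq, Quaternion.sq_eq_neg_normSq.2 hI.1, Quaternion.normSq_eq_norm_mul_self, hI.2]
  simp

theorem neg_mem_quatSphere {I : ℍ} (hI : I ∈ quatSphere) : -I ∈ quatSphere :=
  ⟨by simp [hI.1], by simp [hI.2]⟩

theorem sliceVal_real_axis (I : ℍ) (t : ℝ) : sliceVal I (t, 0) = t := by
  simp [sliceVal]

theorem sliceVal_neg (I : ℍ) (x y : ℝ) : sliceVal (-I) (x, y) = x - y * I := by
  simp [sliceVal, sub_eq_add_neg]

theorem continuous_sliceVal (I : ℍ) : Continuous (sliceVal I) := by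
  have := Quaternion.continuous_coe
  unfold sliceVal
  fun_prop

namespace SliceRegularOn

variable {f : ℍ → ℍ} {U : Set ℍ}

theorem cauchyRiemannAt (hf : SliceRegularOn f U) {I : ℍ} (hI : I ∈ quatSphere) {z : ℝ × ℝ}
    (hz : sliceVal I z ∈ U) :
    CauchyRiemannAt (ContinuousLinearMap.mul ℝ ℍ I) (f ∘ sliceVal I) z :=
  hf I hI z hz

theorem cauchyRiemannAt_mul_left (hf : SliceRegularOn f U) {I J a : ℍ} (hJ : J ∈ quatSphere)
    (ha : SemiconjBy a J I) {z : ℝ × ℝ} (hz : sliceVal J z ∈ U) :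
    CauchyRiemannAt (ContinuousLinearMap.mul ℝ ℍ I) (fun w ↦ a * f (sliceVal J w)) z := by
  refine (hf.cauchyRiemannAt hJ hz).clm_comp (L := ContinuousLinearMap.mul ℝ ℍ a) fun v ↦ ?_
  simp only [ContinuousLinearMap.mul_apply', ← mul_assoc, ha.eq]

theorem apply_sliceVal_eq_mul_add_mul (hf : SliceRegularOn f U) (hU : SliceDomain U)
    (hUax : AxiallySymmetric U) {I J K a b : ℍ} (hI : I ∈ quatSphere) (hJ : J ∈ quatSphere)
    (hK : K ∈ quatSphere) (hab : a + b = 1) (ha : SemiconjBy a J I)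
    (hb : SemiconjBy b K I) {z : ℝ × ℝ} (hz : sliceVal I z ∈ U) :
    f (sliceVal I z) = a * f (sliceVal J z) + b * f (sliceVal K z) := by
  obtain ⟨hUo, -, ⟨r, hr⟩, hUc⟩ := hU
  have hI_sq (v : ℍ) : I * (I * v) = -v := by
    rw [← mul_assoc, mul_self_of_mem_quatSphere hI, neg_one_mul]
  have hreal (t : ℝ) :
      f (sliceVal I (t, 0)) = a * f (sliceVal J (t, 0)) + b * f (sliceVal K (t, 0)) := by
    simp only [sliceVal_real_axis, ← add_mul, hab, one_mul]
  exact eqOn_of_cauchyRiemannAt (T := ContinuousLinearMap.mul ℝ ℍ I) hI_sq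
    (hUo.preimage (continuous_sliceVal I)) (hUc I hI).isPreconnected
    (fun w hw ↦ hf.cauchyRiemannAt hI hw)
    (fun w hw ↦ (hf.cauchyRiemannAt_mul_left hJ ha (hUax w.1 w.2 I hI hw J hJ)).add
      (hf.cauchyRiemannAt_mul_left hK hb (hUax w.1 w.2 I hI hw K hK)))
    (show sliceVal I (r, 0) ∈ U by rwa [sliceVal_real_axis])
    (frequently_nhdsNE_of_forall_real_axis hreal r) hz

end SliceRegularOn

theorem semiconjBy_one_sub_mul {R : Type*} [Ring R] {i j : R} (hi : i * i = -1) (hj : j * j = -1) :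
    SemiconjBy (1 - i * j) j i := by
  rw [SemiconjBy, sub_mul, mul_sub, mul_assoc, hj, ← mul_assoc, hi]
  noncomm_ring

theorem representation_formula (U : Set ℍ) (hU : SliceDomain U) (hUax : AxiallySymmetric U)
    (f : ℍ → ℍ) (hf : SliceRegularOn f U) (J : ℍ) (hJ : J ∈ quatSphere)
    (I : ℍ) (hI : I ∈ quatSphere) (x y : ℝ) (hq : (x : ℍ) + (y : ℍ) * I ∈ U) :
    f ((x : ℍ) + (y : ℍ) * I) =
      (2 : ℝ)⁻¹ • (f ((x : ℍ) + (y : ℍ) * J) + f ((x : ℍ) - (y : ℍ) * J)) +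
        I * ((2 : ℝ)⁻¹ •
          (J * (f ((x : ℍ) - (y : ℍ) * J) - f ((x : ℍ) + (y : ℍ) * J)))) := by
  have hI_sq := mul_self_of_mem_quatSphere hI
  have hJ_sq := mul_self_of_mem_quatSphere hJ
  let a : ℍ := (2 : ℝ)⁻¹ • (1 - I * J)
  let b : ℍ := (2 : ℝ)⁻¹ • (1 - I * -J)
  have hab : a + b = 1 := by
    simp only [a, b, mul_neg]
    module
  have ha : SemiconjBy a J I := (semiconjBy_one_sub_mul hI_sq hJ_sq).smul_left _
  have hb : SemiconjBy b (-J) I :=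
    (semiconjBy_one_sub_mul hI_sq (by rwa [neg_mul_neg])).smul_left _
  have hslice : f (x + y * I) = a * f (x + y * J) + b * f (x - y * J) := by
    rw [← sliceVal_neg]
    exact hf.apply_sliceVal_eq_mul_add_mul hU hUax hI hJ (neg_mem_quatSphere hJ) hab ha hb
      (z := (x, y)) hq
  rw [hslice]
  simp only [a, b, smul_mul_assoc, mul_smul_comm, ← smul_add]
  congr 1
  noncomm_ring
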